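/- arXiv:2303.12619 — 2 statements merged into one kernel-verified Lean document; each statement's English description precedes it below -/
import Mathlib

section
/- Let F be a non-Archimedean local field of characteristic 0 (a finite extension of ℚ_p) and E a quadratic Galois field extension of F, with c the nontrivial element of Gal(E/F). Then there exist infinitely many non conjugate self-dual unitary characters of E^×, pairwise inequivalent under unramified twist; precisely, there is an infinite set S of continuous group homomorphisms χ from E^× to the circle group such that for every χ ∈ S there exists x ∈ E^× with χ(x)·χ(c(x)) ≠ 1, and for any two distinct χ₁, χ₂ ∈ S there exists a unit u of the ring of integers 𝒪_E with χ₁(u) ≠ χ₂(u). -/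
/-!
The characters are built one at a time. The norm of `E` is ultrametric, so the open balls of radius
`r ≤ 1` around `1` are open subgroups `U_r` of `Eˣ`. The group `Eˣ / U_r` with `r = p⁻⁽ᵏ⁺¹⁾` is
discrete, the class of `x_k = 1 + p ^ (k + 1)` in it is nontrivial, and `ℚ/ℤ` (hence the circle)
is a cogenerator of abelian groups: this gives a character `χ_k`, continuous because its kernel
contains `U_r`, with `χ_k(x_k) ≠ 1` and `χ_k(x_j) = 1` for all `j > k`. As the `x_j` are units, the
`χ_k` are pairwise distinct on the unit group.

A character that is conjugate self-dual satisfies `χ(p)² = χ(p) χ(c(p)) = 1`. Multiplication by a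
power `|x|^(it)` with `|p|^(2it) = -1` leaves the restriction to the unit group unchanged and
destroys this equality, so one of `χ_k` and `χ_k |·|^(it)` is not conjugate self-dual.
-/

namespace UnitaryChar

/-- The embedding `ℚ/ℤ → 𝕊¹`, `q ↦ exp (2πiq)`, written additively. -/
noncomputable def ratCircle : AddCircle (1 : ℚ) →+ Additive Circle :=
  QuotientAddGroup.lift (AddSubgroup.zmultiples (1 : ℚ))
    { toFun := fun q => Additive.ofMul (Circle.exp (2 * Real.pi * (q : ℝ)))
      map_zero' := by simp
      map_add' := fun a b => by
        rw [← ofMul_mul, ← Circle.exp_add]; push_cast; ring_nf }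
    (by
      rintro _ ⟨n, rfl⟩
      simp only [AddMonoidHom.mem_ker, AddMonoidHom.coe_mk, ZeroHom.coe_mk]
      rw [ofMul_eq_zero, Circle.exp_eq_one]
      exact ⟨n, by simp; ring⟩)

lemma ratCircle_ne_zero {a : AddCircle (1 : ℚ)} (ha : a ≠ 0) : ratCircle a ≠ 0 := by
  induction a using QuotientAddGroup.induction_on with
  | H q =>
    intro h
    apply ha
    change Additive.ofMul (Circle.exp (2 * Real.pi * (q : ℝ))) = 0 at h
    rw [ofMul_eq_zero, Circle.exp_eq_one] at h
    obtain ⟨n, hn⟩ := h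
    rw [QuotientAddGroup.eq_zero_iff]
    refine ⟨n, ?_⟩
    have hpi := Real.pi_pos
    have h2 : (q : ℝ) = n := by
      have : (2 * Real.pi) * (q : ℝ) = (2 * Real.pi) * n := by linarith
      exact mul_left_cancel₀ (by positivity) this
    have h3 : q = n := by exact_mod_cast h2
    simp [h3]

/-- Circle-valued characters of an abelian group separate a subgroup from any element
outside it. -/
lemma exists_char {G : Type*} [CommGroup G] (U : Subgroup G) {x : G} (hx : x ∉ U) :
    ∃ χ : G →* Circle, (∀ u ∈ U, χ u = 1) ∧ χ x ≠ 1 := by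
  have hne : Additive.ofMul (QuotientGroup.mk x : G ⧸ U) ≠ 0 := by
    rw [Ne, ofMul_eq_zero, QuotientGroup.eq_one_iff]; exact hx
  obtain ⟨φ, hφ⟩ := CharacterModule.exists_character_apply_ne_zero_of_ne_zero hne
  let ψ : G ⧸ U →* Circle := AddMonoidHom.toMultiplicative (ratCircle.comp φ)
  refine ⟨ψ.comp (QuotientGroup.mk' U), fun u hu => ?_, fun h => ?_⟩
  · have : QuotientGroup.mk' U u = 1 := (QuotientGroup.eq_one_iff u).2 hu
    rw [MonoidHom.comp_apply, this, map_one]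
  · exact ratCircle_ne_zero hφ h

section Field

variable {E : Type*} [NormedField E]

/-- The open ball of radius `r ≤ 1` around `1`, as a subgroup of `Eˣ` for an ultrametric `E`. -/
def ballOne [IsUltrametricDist E] (r : ℝ) (h0 : 0 < r) (h1 : r ≤ 1) : Subgroup Eˣ where
  carrier := {u | ‖(u : E) - 1‖ < r}
  one_mem' := by simpa using h0
  mul_mem' := by
    intro a b ha hb
    simp only [Set.mem_ofPred_eq] at ha hb ⊢
    have e : ((a * b : Eˣ) : E) - 1 =
        ((a : E) - 1) * ((b : E) - 1) + (((a : E) - 1) + ((b : E) - 1)) := by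
      push_cast; ring
    rw [e]
    refine (IsUltrametricDist.norm_add_le_max _ _).trans_lt (max_lt ?_ ?_)
    · rw [norm_mul]
      nlinarith [norm_nonneg ((a : E) - 1), norm_nonneg ((b : E) - 1)]
    · exact (IsUltrametricDist.norm_add_le_max _ _).trans_lt (max_lt ha hb)
  inv_mem' := by
    intro a ha
    simp only [Set.mem_ofPred_eq] at ha ⊢
    have hn : ‖(a : E)‖ = 1 := by
      have := IsUltrametricDist.norm_add_eq_max_of_norm_ne_norm
        (x := (a : E) - 1) (y := 1) (by rw [norm_one]; exact (ha.trans_le h1).ne)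
      rwa [sub_add_cancel, norm_one, max_eq_right (ha.le.trans h1)] at this
    have e : ((a⁻¹ : Eˣ) : E) - 1 = -((a : E)⁻¹ * ((a : E) - 1)) := by
      have : (a : E) ≠ 0 := a.ne_zero
      push_cast; field_simp; ring
    rw [e, norm_neg, norm_mul, norm_inv, hn]
    simpa using ha

lemma continuous_of_trivial_ball {r : ℝ} (h0 : 0 < r) (χ : Eˣ →* Circle)
    (h : ∀ u : Eˣ, ‖(u : E) - 1‖ < r → χ u = 1) : Continuous χ := by
  refine continuous_of_continuousAt_one χ ?_
  have hev : ∀ᶠ u : Eˣ in nhds 1, ‖(u : E) - 1‖ < r := by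
    have hc : Continuous fun u : Eˣ => ‖(u : E) - 1‖ :=
      (Units.continuous_val.sub continuous_const).norm
    exact hc.continuousAt.eventually_lt continuousAt_const (by simpa using h0)
  have heq : (fun _ : Eˣ => (1 : Circle)) =ᶠ[nhds 1] χ := by
    filter_upwards [hev] with u hu
    exact (h u hu).symm
  exact continuousAt_const.congr heq

/-- The unramified character `x ↦ |x|^(it)`. -/
noncomputable def normTwist (E : Type*) [NormedField E] (t : ℝ) : Eˣ →* Circle where
  toFun x := Circle.exp (t * Real.log ‖(x : E)‖)
  map_one' := by simp
  map_mul' x y := by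
    rw [← Circle.exp_add, Units.val_mul, norm_mul,
      Real.log_mul (norm_ne_zero_iff.2 x.ne_zero) (norm_ne_zero_iff.2 y.ne_zero), mul_add]

lemma continuous_normTwist (t : ℝ) : Continuous (normTwist E t) := by
  refine Circle.exp.continuous.comp (continuous_const.mul ?_)
  exact Units.continuous_val.norm.log fun x => norm_ne_zero_iff.2 x.ne_zero

lemma normTwist_of_norm_eq_one (t : ℝ) {u : Eˣ} (hu : ‖(u : E)‖ = 1) : normTwist E t u = 1 := by
  change Circle.exp (t * Real.log ‖(u : E)‖) = 1
  simp [hu]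

/-- Any continuous character has an unramified twist whose value at a given `x` of norm `≠ 1`
does not square to `1`. -/
lemma exists_twist (χ : Eˣ →* Circle) (hχ : Continuous χ) (x : Eˣ) (hx : ‖(x : E)‖ ≠ 1) :
    ∃ χ' : Eˣ →* Circle, Continuous χ' ∧ (∀ u : Eˣ, ‖(u : E)‖ = 1 → χ' u = χ u) ∧
      χ' x * χ' x ≠ 1 := by
  by_cases h : χ x * χ x = 1
    -- This exponent gives `|x|^(2it) = exp (iπ) = -1`.
  · set t : ℝ := Real.pi / (2 * Real.log ‖(x : E)‖) with ht
    refine ⟨χ * normTwist E t, hχ.mul (continuous_normTwist t), fun u hu => ?_, ?_⟩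
    · rw [MonoidHom.mul_apply, normTwist_of_norm_eq_one t hu, mul_one]
    · rw [MonoidHom.mul_apply, mul_mul_mul_comm, h, one_mul]
      change Circle.exp (t * Real.log ‖(x : E)‖) * Circle.exp (t * Real.log ‖(x : E)‖) ≠ 1
      have hl : Real.log ‖(x : E)‖ ≠ 0 :=
        Real.log_ne_zero_of_pos_of_ne_one (norm_pos_iff.2 x.ne_zero) hx
      have e : t * Real.log ‖(x : E)‖ + t * Real.log ‖(x : E)‖ = Real.pi := by
        rw [ht]; field_simp; ring
      rw [← Circle.exp_add, e]
      intro h'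
      have := congrArg (fun z : Circle => (z : ℂ)) h'
      simp only [Circle.coe_exp, Complex.exp_pi_mul_I, Circle.coe_one] at this
      norm_num at this
  · exact ⟨χ, hχ, fun _ _ => rfl, h⟩

end Field

end UnitaryChar

/-- Let `F` be a finite extension of `ℚ_p` and `E` a quadratic Galois
extension of `F`, with `c` the nontrivial element of `Gal(E/F)`.  `E` carries the
unique extension of the `p`-adic absolute value (encoded by a multiplicative norm on
`E` for which the structure map `ℚ_p → E` is an isometry).  Then there is an infinite
set `S` of non conjugate self-dual unitary characters of `Eˣ` (continuous group
homomorphisms `χ` to the circle group such that `x ↦ χ(x)·χ(c x)` is not identically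
`1`), pairwise inequivalent under unramified twist: for distinct `χ₁, χ₂ ∈ S` there is
a unit `u` of the ring of integers of `E` (i.e. `u : Eˣ` with `‖u‖ = 1`) with
`χ₁ u ≠ χ₂ u`. -/
theorem infinitely_many_non_conjugate_self_dual_unitary_characters_up_to_unramified_twist
    (p : ℕ) [Fact p.Prime]
    (F : Type*) [Field F] [Algebra ℚ_[p] F] [FiniteDimensional ℚ_[p] F]
    (E : Type*) [NormedField E] [Algebra ℚ_[p] E] [Algebra F E]
    [IsScalarTower ℚ_[p] F E] [FiniteDimensional F E]
    (hquad : Module.finrank F E = 2) [IsGalois F E]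
    (hiso : ∀ x : ℚ_[p], ‖algebraMap ℚ_[p] E x‖ = ‖x‖)
    (c : E ≃ₐ[F] E) (hc : c ≠ AlgEquiv.refl) :
    ∃ S : Set (Eˣ →* Circle), S.Infinite ∧
      (∀ χ ∈ S, Continuous χ) ∧
      (∀ χ ∈ S, ∃ x : Eˣ, χ x * χ (Units.map (c : E →* E) x) ≠ 1) ∧
      (∀ χ₁ ∈ S, ∀ χ₂ ∈ S, χ₁ ≠ χ₂ →
        ∃ u : Eˣ, ‖(u : E)‖ = 1 ∧ χ₁ u ≠ χ₂ u) := by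
  have hprime : p.Prime := Fact.out
  have hp1 : (1 : ℝ) < p := by exact_mod_cast hprime.one_lt
  have hpn : ‖(p : E)‖ = (p : ℝ)⁻¹ := by
    have := hiso (p : ℚ_[p])
    rwa [map_natCast, Padic.norm_p] at this
  have hult : IsUltrametricDist E := by
    refine IsUltrametricDist.isUltrametricDist_of_forall_norm_natCast_le_one fun n => ?_
    have := hiso (n : ℚ_[p])
    rw [map_natCast] at this
    rw [this]
    exact_mod_cast Padic.norm_int_le_one (p := p) (n : ℤ)
  have hinv0 : (0 : ℝ) < (p : ℝ)⁻¹ := by positivity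
  have hinv1 : (p : ℝ)⁻¹ < 1 := inv_lt_one_of_one_lt₀ hp1
  have hp0 : (p : E) ≠ 0 := by rw [← norm_pos_iff, hpn]; exact hinv0
  have hr1 : ∀ k : ℕ, ((p : ℝ)⁻¹) ^ (k + 1) < 1 := fun k =>
    pow_lt_one₀ hinv0.le hinv1 (Nat.succ_ne_zero k)
  have hxn : ∀ k : ℕ, ‖(1 : E) + (p : E) ^ (k + 1)‖ = 1 := fun k => by
    have hk : ‖(p : E) ^ (k + 1)‖ < 1 := by rw [norm_pow, hpn]; exact hr1 k
    rw [IsUltrametricDist.norm_add_eq_max_of_norm_ne_norm (by rw [norm_one]; exact hk.ne'),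
      norm_one, max_eq_left hk.le]
  let x : ℕ → Eˣ := fun k => Units.mk0 ((1 : E) + (p : E) ^ (k + 1))
    (by rw [← norm_pos_iff, hxn]; exact one_pos)
  have hx1 : ∀ k, ‖((x k : Eˣ) : E) - 1‖ = ((p : ℝ)⁻¹) ^ (k + 1) := fun k => by
    simp [x, hpn]
  have key : ∀ k : ℕ, ∃ χ : Eˣ →* Circle, Continuous χ ∧ χ (x k) ≠ 1 ∧
      (∀ j, k < j → χ (x j) = 1) ∧
      χ (Units.mk0 (p : E) hp0) * χ (Units.mk0 (p : E) hp0) ≠ 1 := fun k => by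
    have hr0 : (0 : ℝ) < ((p : ℝ)⁻¹) ^ (k + 1) := by positivity
    obtain ⟨χ, h1, h2⟩ := UnitaryChar.exists_char
      (UnitaryChar.ballOne (E := E) _ hr0 (hr1 k).le) (x := x k) (fun h => (hx1 k).not_lt h)
    obtain ⟨χ', hc', hu, hne⟩ := UnitaryChar.exists_twist χ
      (UnitaryChar.continuous_of_trivial_ball hr0 χ h1) (Units.mk0 (p : E) hp0)
      (by rw [Units.val_mk0, hpn]; exact hinv1.ne)
    refine ⟨χ', hc', by rwa [hu _ (hxn k)], fun j hj => ?_, hne⟩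
    rw [hu _ (hxn j)]
    refine h1 _ ?_
    change ‖((x j : Eˣ) : E) - 1‖ < _
    rw [hx1]
    exact pow_lt_pow_right_of_lt_one₀ hinv0 hinv1 (by omega)
  choose f hf using key
  have hdist : ∀ i j, i < j → f i (x j) ≠ f j (x j) := fun i j hij => by
    rw [(hf i).2.2.1 j hij]; exact (hf j).2.1.symm
  have hinj : Function.Injective f := fun i j hij => by
    by_contra hne
    rcases lt_or_gt_of_ne hne with h | h
    · exact hdist i j h (by rw [hij])
    · exact hdist j i h (by rw [hij])
  refine ⟨Set.range f, Set.infinite_range_of_injective hinj, ?_, ?_, ?_⟩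
  · rintro _ ⟨k, rfl⟩; exact (hf k).1
  · rintro _ ⟨k, rfl⟩
    refine ⟨Units.mk0 (p : E) hp0, ?_⟩
    have hcp : Units.map (c : E →* E) (Units.mk0 (p : E) hp0) = Units.mk0 (p : E) hp0 := by
      ext; exact map_natCast c p
    rw [hcp]
    exact (hf k).2.2.2
  · rintro _ ⟨i, rfl⟩ _ ⟨j, rfl⟩ hne
    rcases lt_or_gt_of_ne (fun h : i = j => hne (by rw [h])) with h | h
    · exact ⟨x j, hxn j, hdist i j h⟩
    · exact ⟨x i, hxn i, (hdist j i h).symm⟩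
end

section
/- Let E be a finite field extension of ℚ_p of degree d, with residue field k_E (the quotient of the ring of integers 𝒪_E by its maximal ideal). Then there is a group isomorphism E^× ≅ ℤ × k_E^× × μ_{p^∞}(E) × ℤ_p^d, where μ_{p^∞}(E) denotes the p-primary torsion subgroup of E^× (the group of roots of unity in E of p-power order) and ℤ_p^d is the direct product of d copies of the additive group of p-adic integers. -/
/-!
The group `Eˣ` is split off piece by piece, without Teichmüller lifts or a logarithm.

* The value group is infinite cyclic: `E` is locally compact, so the norm attains a maximum
  `‖π‖ < 1` on the open unit ball, and `Eˣ = π ^ ℤ × {‖x‖ = 1}`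
  (`nonempty_units_mulEquiv_int_prod`).
* Let `U = {‖x - 1‖ < 1}` be the group of principal units. The `p`-adic exponential series has
  positive radius of convergence and strict derivative `1` at `0`, so it maps a small `ℤ_p`-lattice
  of `E` isomorphically onto a subgroup of `U` which is a neighbourhood of `1`
  (`exists_exp_lattice`). Since `‖x ^ p - 1‖ ≤ c ‖x - 1‖` on `U` with a uniform `c < 1`, some power
  `x ↦ x ^ p ^ k` maps all of `U` into this copy of `ℤ_p ^ d` (`exists_lattice_principalUnits`).
* The rest is algebra. Let `A` be an abelian group containing `ℤ_p ^ d`, with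
  `p ^ k A ⊆ ℤ_p ^ d`. Then `p ^ k A` lies between `p ^ k ℤ_p ^ d` and `ℤ_p ^ d`, hence is a free
  `ℤ_p`-module of rank `d`, so that `A` modulo its `p ^ k`-torsion `T` is `ℤ_p ^ d`. This quotient
  splits: lifts of a basis together with `p ^ k A` generate a complement of `T`
  (`exists_free_complement`). Applied to `U` this gives `U ≅ μ_{p^∞}(E) × ℤ_p ^ d`.
* For `n` prime to `p`, raising to the `n`-th power is bijective on `U`
  (`pow_bijective_of_coprime`). With `n` the order of `k_Eˣ`, the `n`-th roots of unity in `E`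
  form a complement of `U` in `{‖x‖ = 1}`, isomorphic to `k_Eˣ` by reduction
  (`nonempty_normOneUnits_mulEquiv`).
-/

open Topology

/-! ### Abelian groups commensurable with a free `ℤ_p`-module -/

/-- If `ℤ_p ^ d` embeds in an abelian group `A` with image containing `p ^ k A`, then the
`p ^ k`-torsion of `A` has a complement, which is the image under `s` of `ℤ_p ^ d`. -/
theorem exists_free_complement {p : ℕ} [Fact p.Prime] {d : ℕ} {A : Type*} [AddCommGroup A]
    (ι : (Fin d → ℤ_[p]) →+ A) (hι : Function.Injective ι) (k : ℕ)
    (h : ∀ a : A, ∃ v, ι v = p ^ k • a) :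
    ∃ s : (Fin d → ℤ_[p]) →+ A, (∀ v, p ^ k • s v = 0 → v = 0) ∧
      ∀ a : A, ∃ v, p ^ k • (a - s v) = 0 := by
  have hp0 : (p : ℤ_[p]) ^ k ≠ 0 := pow_ne_zero _ (by exact_mod_cast (Fact.out : p.Prime).ne_zero)
  have happr (c : ℤ_[p]) : ∃ (n : ℕ) (b : ℤ_[p]), c = n + p ^ k * b := by
    obtain ⟨b, hb⟩ := Ideal.mem_span_singleton.1 (PadicInt.appr_spec k c)
    exact ⟨c.appr k, b, by rw [← hb]; ring⟩
  -- `W = p ^ k A` is stable under `ℤ_p`, since scalars are integers modulo `p ^ k` and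
  -- `p ^ k ℤ_p ^ d ⊆ p ^ k A`
  let W : Submodule ℤ_[p] (Fin d → ℤ_[p]) :=
    { carrier := {v | ∃ a : A, ι v = p ^ k • a}
      zero_mem' := ⟨0, by simp⟩
      add_mem' := by
        rintro v w ⟨a, ha⟩ ⟨b, hb⟩
        exact ⟨a + b, by rw [map_add, ha, hb, smul_add]⟩
      smul_mem' := by
        rintro c v ⟨a, ha⟩
        obtain ⟨n, b, rfl⟩ := happr c
        refine ⟨n • a + ι (b • v), ?_⟩
        have : ((n : ℤ_[p]) + p ^ k * b) • v = n • v + p ^ k • (b • v) := by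
          ext i; simp; ring
        rw [this, map_add, map_nsmul, map_nsmul, ha, smul_add, smul_comm] }
  have hW : Module.finrank ℤ_[p] W = d := by
    apply le_antisymm
    · simpa using LinearMap.finrank_le_finrank_of_injective (f := W.subtype) W.injective_subtype
    · let f : (Fin d → ℤ_[p]) →ₗ[ℤ_[p]] W :=
        LinearMap.codRestrict W ((p : ℤ_[p]) ^ k • LinearMap.id) (fun v => ⟨ι v, by
          rw [← map_nsmul]; congr 1; ext i; simp⟩)
      have hf : Function.Injective f := by
        intro v w hvw
        have := congrArg Subtype.val hvw
        exact smul_right_injective _ hp0 this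
      simpa using LinearMap.finrank_le_finrank_of_injective hf
  let e : W ≃ₗ[ℤ_[p]] (Fin d → ℤ_[p]) :=
    LinearEquiv.ofFinrankEq _ _ (by simp [hW])
  choose f hf using h
  -- `g` is multiplication by `p ^ k`, viewed as a surjection of `A` onto `W ≅ ℤ_p ^ d`
  let g : A →+ (Fin d → ℤ_[p]) := AddMonoidHom.mk' (fun a => e ⟨f a, a, hf a⟩) (by
    intro a b
    rw [← map_add]
    congr 1
    apply Subtype.ext
    apply hι
    change ι (f (a + b)) = ι (f a + f b)
    rw [map_add ι, hf, hf, hf, smul_add])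
  have hg0 (a : A) : g a = 0 ↔ p ^ k • a = 0 := by
    change e _ = 0 ↔ _
    rw [e.map_eq_zero_iff, ← hf a, map_eq_zero_iff ι hι]
    exact Subtype.ext_iff
  have hgs (v) : ∃ a, g a = v := by
    obtain ⟨⟨w, a, ha⟩, rfl⟩ := e.surjective v
    refine ⟨a, ?_⟩
    change e _ = e _
    congr 2
    apply hι
    rw [hf, ha]
  choose a ha using fun i : Fin d => hgs (Pi.single i 1)
  -- the complement `C` is generated by lifts of the basis vectors and by `p ^ k • A`
  let C : AddSubgroup A :=
    { carrier := {c | ∃ (n : Fin d → ℤ) (b : A), c = ∑ i, n i • a i + p ^ k • b}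
      zero_mem' := ⟨0, 0, by simp⟩
      add_mem' := by
        rintro _ _ ⟨n, b, rfl⟩ ⟨n', b', rfl⟩
        refine ⟨n + n', b + b', ?_⟩
        simp only [Pi.add_apply, add_smul, smul_add, Finset.sum_add_distrib]
        abel
      neg_mem' := by
        rintro _ ⟨n, b, rfl⟩
        refine ⟨-n, -b, ?_⟩
        simp only [Pi.neg_apply, neg_smul, smul_neg, Finset.sum_neg_distrib]
        abel }
  have hgC (n : Fin d → ℤ) (b : A) (i : Fin d) :
      g (∑ i, n i • a i + p ^ k • b) i = n i + p ^ k * g b i := by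
    simp [ha, Pi.single_apply]
  have hbij : Function.Bijective (g.comp C.subtype) := by
    constructor
    · rw [injective_iff_map_eq_zero]
      rintro ⟨_, n, b, rfl⟩ hc
      have hc' : g (∑ i, n i • a i + p ^ k • b) = 0 := hc
      have hn (i) : ∃ m : ℤ, n i = p ^ k * m := by
        have h1 := congrFun hc' i
        rw [hgC, Pi.zero_apply] at h1
        have h2 : (n i : ℤ_[p]) ∈ Ideal.span {(p : ℤ_[p]) ^ k} :=
          Ideal.mem_span_singleton.2 ⟨-g b i, by linear_combination h1⟩
        rw [← PadicInt.norm_le_pow_iff_mem_span_pow, PadicInt.norm_int_le_pow_iff_dvd] at h2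
        exact_mod_cast h2
      choose m hm using hn
      have hsum : ∑ i, n i • a i + p ^ k • b = p ^ k • (∑ i, m i • a i + b) := by
        rw [smul_add, Finset.smul_sum]
        congr 1
        refine Finset.sum_congr rfl fun i _ => ?_
        rw [hm i, mul_smul, ← natCast_zsmul (m i • a i)]
        push_cast
        rfl
      apply Subtype.ext
      change ∑ i, n i • a i + p ^ k • b = 0
      rw [hsum, ← hg0]
      rw [hsum, map_nsmul] at hc'
      exact (smul_eq_zero_iff_right (pow_ne_zero k (Fact.out : p.Prime).ne_zero)).1 hc'
    · intro v
      choose n b hnb using fun i => happr (v i)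
      obtain ⟨b', hb'⟩ := hgs b
      refine ⟨⟨_, fun i => n i, b', rfl⟩, ?_⟩
      ext i
      change g (∑ i, ((n i : ℕ) : ℤ) • a i + p ^ k • b') i = _
      rw [hgC, hb', hnb i]
      simp
  let E := AddEquiv.ofBijective _ hbij
  have hE (v) : g (E.symm v : C) = v := E.apply_symm_apply v
  refine ⟨C.subtype.comp E.symm.toAddMonoidHom, ?_, ?_⟩
  · intro v hv
    rw [← hg0] at hv
    rw [← hE v]
    exact hv
  · intro x
    refine ⟨g x, ?_⟩
    rw [← hg0, map_sub]
    exact sub_eq_zero.2 (hE _).symm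

/-- If `ℤ_p ^ d` embeds in an abelian group `A` with image containing all `p ^ k`-th powers, then
taking `n`-th powers is bijective on `A` for every `n` prime to `p`. By Bézout it suffices that this
holds for `p ^ k`-th powers, where it does because `n` is a unit in `ℤ_p`. -/
theorem pow_bijective_of_coprime {p : ℕ} [Fact p.Prime] {d : ℕ} {A : Type*} [CommGroup A]
    (ι : Multiplicative (Fin d → ℤ_[p]) →* A) (hι : Function.Injective ι) (k : ℕ)
    (h : ∀ a : A, ∃ v, ι v = a ^ p ^ k) {n : ℕ} (hn : n.Coprime p) :
    Function.Bijective (fun a : A => a ^ n) := by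
  have hnu : IsUnit (n : ℤ_[p]) := by
    rw [PadicInt.isUnit_iff, PadicInt.norm_natCast_eq_one_iff]
    exact hn.symm
  have hbez : IsCoprime (n : ℤ) ((p ^ k : ℕ) : ℤ) :=
    Nat.isCoprime_iff_coprime.2 (hn.pow_right k)
  obtain ⟨r, s, hrs⟩ := hbez
  have hexp (a : A) : a = (a ^ n) ^ r * (a ^ p ^ k) ^ s := by
    rw [← zpow_natCast a n, ← zpow_natCast a (p ^ k), ← zpow_mul, ← zpow_mul, ← zpow_add,
      mul_comm _ r, mul_comm _ s, hrs, zpow_one]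
  constructor
  · have : Function.Injective (powMonoidHom n : A →* A) := by
      rw [injective_iff_map_eq_one]
      intro a (ha : a ^ n = 1)
      obtain ⟨v, hv⟩ := h a
      have h1 : ι (v ^ n) = ι 1 := by
        rw [map_pow, hv, ← pow_mul, mul_comm, pow_mul, ha, one_pow, map_one]
      have h2 : (n : ℤ_[p]) • v.toAdd = 0 := by
        rw [Nat.cast_smul_eq_nsmul]
        exact congrArg Multiplicative.toAdd (hι h1)
      have h3 : v = 1 := congrArg Multiplicative.ofAdd (hnu.smul_eq_zero.1 h2)
      rw [hexp a, ha, ← hv, h3, map_one, one_zpow, one_zpow, one_mul]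
    exact this
  · intro a
    obtain ⟨v, hv⟩ := h a
    obtain ⟨u, hu⟩ := hnu
    refine ⟨a ^ r * ι (Multiplicative.ofAdd ((↑u⁻¹ : ℤ_[p]) • v.toAdd)) ^ s, ?_⟩
    have h1 : ι (Multiplicative.ofAdd ((↑u⁻¹ : ℤ_[p]) • v.toAdd)) ^ n = a ^ p ^ k := by
      rw [← hv, ← map_pow, ← ofAdd_nsmul, ← Nat.cast_smul_eq_nsmul ℤ_[p], smul_smul, ← hu,
        Units.mul_inv, one_smul]
      rfl
    change (_ * _) ^ n = a
    conv_rhs => rw [hexp a, ← h1]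
    rw [mul_pow]
    congr 1
    · rw [← zpow_natCast, ← zpow_natCast, ← zpow_mul, ← zpow_mul, mul_comm]
    · rw [← zpow_natCast, ← zpow_natCast, ← zpow_mul, ← zpow_mul, mul_comm]

/-- Recognition of an internal direct product of the images of `s` and `i`. -/
theorem nonempty_mulEquiv_prod {A B K : Type*} [CommGroup A] [Group B] [Group K]
    (s : B →* A) (i : K →* A) (hi : Function.Injective i)
    (hs : ∀ b, s b ∈ i.range → b = 1) (h : ∀ a, ∃ b, a * (s b)⁻¹ ∈ i.range) :
    Nonempty (A ≃* B × K) := by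
  let f : B × K →* A :=
    { toFun := fun x => s x.1 * i x.2
      map_one' := by simp
      map_mul' := fun x y => by
        simp only [Prod.fst_mul, Prod.snd_mul, map_mul]
        exact mul_mul_mul_comm _ _ _ _ }
  refine ⟨(MulEquiv.ofBijective f ⟨?_, fun a => ?_⟩).symm⟩
  · rw [injective_iff_map_eq_one]
    rintro ⟨b, k⟩ hbk
    have hbk' : s b * i k = 1 := hbk
    obtain rfl : b = 1 := hs b ⟨k⁻¹, by rw [map_inv]; exact (eq_inv_of_mul_eq_one_left hbk').symm⟩
    rw [map_one, one_mul] at hbk'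
    rw [(injective_iff_map_eq_one i).1 hi k hbk']
    rfl
  · obtain ⟨b, k, hk⟩ := h a
    exact ⟨(b, k), by change s b * i k = a; rw [hk]; simp⟩

/-! ### The `p`-adic exponential -/

/-- Convergence follows from `‖1 / n!‖ ≤ p ^ n`, as the `p`-adic valuation of `n!` is at most
`n`. -/
theorem expSeries_radius_pos_padic (p : ℕ) [Fact p.Prime] (E : Type*) [NormedField E]
    [NormedAlgebra ℚ_[p] E] : 0 < (NormedSpace.expSeries ℚ_[p] E).radius := by
  have hp : 0 < (p : NNReal) := by exact_mod_cast (Fact.out : p.Prime).pos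
  refine lt_of_lt_of_le ?_
    (FormalMultilinearSeries.le_radius_of_bound _ (r := (p : NNReal)⁻¹) 1 fun n => ?_)
  · simp
  have h1 : ‖NormedSpace.expSeries ℚ_[p] E n‖ ≤ (p : ℝ) ^ n := by
    rw [NormedSpace.expSeries, norm_smul, norm_inv]
    have h2 : ‖ContinuousMultilinearMap.mkPiAlgebraFin ℚ_[p] n E‖ ≤ 1 := by simp
    have h3 : ‖(n.factorial : ℚ_[p])‖⁻¹ ≤ (p : ℝ) ^ n := by
      rw [Padic.norm_eq_zpow_neg_valuation (by exact_mod_cast n.factorial_ne_zero),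
        Padic.valuation_natCast, ← zpow_neg, neg_neg, zpow_natCast]
      exact pow_le_pow_right₀ (by exact_mod_cast (Fact.out : p.Prime).one_le)
        (padicValNat_factorial_le p n)
    calc _ ≤ (p : ℝ) ^ n * 1 := by gcongr
      _ = _ := mul_one _
  calc _ ≤ (p : ℝ) ^ n * (((p : NNReal)⁻¹ : NNReal) : ℝ) ^ n := by gcongr
    _ = 1 := by
      rw [← mul_pow]
      push_cast
      rw [mul_inv_cancel₀ (by exact_mod_cast hp.ne'), one_pow]

/-- The exponential identifies a small lattice `ℤ_p ^ d` of `E` with a subgroup of `Eˣ` which is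
contained in the principal units and is a neighbourhood of `1`. -/
theorem exists_exp_lattice (p : ℕ) [Fact p.Prime] (E : Type*) [NormedField E]
    [NormedAlgebra ℚ_[p] E] [FiniteDimensional ℚ_[p] E] (d : ℕ)
    (hd : Module.finrank ℚ_[p] E = d) :
    ∃ ι : Multiplicative (Fin d → ℤ_[p]) →* Eˣ, Function.Injective ι ∧
      (∀ v, ‖(ι v : E) - 1‖ < 1) ∧ ∀ᶠ x in 𝓝 (1 : E), ∃ v, (ι v : E) = x := by
  have : CompleteSpace E := FiniteDimensional.complete ℚ_[p] E
  have hr := expSeries_radius_pos_padic p E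
  have hd0 : HasStrictFDerivAt (NormedSpace.exp : E → E)
      ((ContinuousLinearEquiv.refl ℚ_[p] E : E ≃L[ℚ_[p]] E) : E →L[ℚ_[p]] E) 0 :=
    hasStrictFDerivAt_exp_zero_of_radius_pos hr
  let P := hd0.toOpenPartialHomeomorph
  have hP : P.source ∈ 𝓝 (0 : E) :=
    P.open_source.mem_nhds hd0.mem_toOpenPartialHomeomorph_source
  have hball : Metric.eball (0 : E) (NormedSpace.expSeries ℚ_[p] E).radius ∈ 𝓝 (0 : E) :=
    Metric.eball_mem_nhds _ hr
  have hone : {x : E | ‖NormedSpace.exp x - 1‖ < 1} ∈ 𝓝 (0 : E) := by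
    have h1 : ContinuousAt (fun x : E => ‖NormedSpace.exp x - 1‖) 0 :=
      (hd0.continuousAt.sub continuousAt_const).norm
    exact h1.eventually_lt_const (by simp)
  let θ : (Fin d → ℚ_[p]) ≃L[ℚ_[p]] E :=
    (Module.finBasisOfFinrankEq ℚ_[p] E hd).equivFun.symm.toContinuousLinearEquiv
  have hS := Filter.inter_mem hP (Filter.inter_mem hball hone)
  have hθS := θ.continuous.continuousAt.preimage_mem_nhds (by rw [map_zero]; exact hS :
    _ ∈ 𝓝 (θ 0))
  -- for large `n`, the lattice `p ^ n θ(ℤ_p ^ d)` lies in the set where `exp` is defined, additive,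
  -- injective and close to `1`
  obtain ⟨ε, hε, hεS⟩ := Metric.mem_nhds_iff.1 hθS
  obtain ⟨n, hn⟩ := exists_pow_lt_of_lt_one hε (Padic.norm_p_lt_one (p := p))
  have hp0 : (p : ℚ_[p]) ^ n ≠ 0 := pow_ne_zero _ (by exact_mod_cast (Fact.out : p.Prime).ne_zero)
  let c : (Fin d → ℤ_[p]) →+ (Fin d → ℚ_[p]) :=
    { toFun := fun v i => p ^ n * (v i : ℚ_[p])
      map_zero' := by ext; simp
      map_add' := fun v w => by ext; simp [mul_add] }
  have hcinj : Function.Injective c := fun v w hvw => by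
    ext i
    have h1 : (p : ℚ_[p]) ^ n * (v i : ℚ_[p]) = p ^ n * w i := congrFun hvw i
    exact Subtype.ext (mul_left_cancel₀ hp0 h1)
  have hc (v) : c v ∈ Metric.ball (0 : Fin d → ℚ_[p]) ε := by
    rw [mem_ball_zero_iff, pi_norm_lt_iff hε]
    intro i
    change ‖(p : ℚ_[p]) ^ n * (v i : ℚ_[p])‖ < ε
    rw [norm_mul, norm_pow]
    exact (mul_le_of_le_one_right (by positivity) (PadicInt.norm_le_one _)).trans_lt hn
  have hm (v) := hεS (hc v)
  let f : Multiplicative (Fin d → ℤ_[p]) →* E :=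
    { toFun := fun v => NormedSpace.exp (θ (c v.toAdd))
      map_one' := by simp
      map_mul' := fun v w => by
        rw [toAdd_mul, map_add, map_add]
        exact NormedSpace.exp_add_of_mem_ball (𝕂 := ℚ_[p]) (hm v.toAdd).2.1 (hm w.toAdd).2.1 }
  refine ⟨f.toHomUnits, ?_, fun v => (hm v.toAdd).2.2, ?_⟩
  · intro v w hvw
    have h1 : NormedSpace.exp (θ (c v.toAdd)) = NormedSpace.exp (θ (c w.toAdd)) :=
      congrArg Units.val hvw
    exact hcinj (θ.injective (P.injOn (hm v.toAdd).1 (hm w.toAdd).1 h1))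
  · -- the lattice is a neighbourhood of zero, and `exp` maps such a set to a neighbourhood of one
    have hL : Set.range (fun v => θ (c v)) ∈ 𝓝 (0 : E) := by
      have h1 : Metric.closedBall (0 : Fin d → ℚ_[p]) ‖(p : ℚ_[p]) ^ n‖ ∈ 𝓝 (θ.symm 0) := by
        rw [map_zero]
        exact Metric.closedBall_mem_nhds _ (norm_pos_iff.2 hp0)
      refine Filter.mem_of_superset (θ.symm.continuous.continuousAt.preimage_mem_nhds h1) ?_
      intro x hx
      rw [Set.mem_preimage, mem_closedBall_zero_iff, pi_norm_le_iff_of_nonneg (norm_nonneg _)] at hx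
      refine ⟨fun i => ⟨((p : ℚ_[p]) ^ n)⁻¹ * θ.symm x i, ?_⟩, ?_⟩
      · rw [norm_mul, norm_inv]
        exact inv_mul_le_one_of_le₀ (hx i) (norm_nonneg _)
      · change θ _ = x
        rw [← θ.eq_symm_apply]
        ext i
        exact mul_inv_cancel_left₀ hp0 _
    have h2 := hd0.map_nhds_eq_of_equiv
    rw [NormedSpace.exp_zero] at h2
    rw [← h2, Filter.eventually_map]
    filter_upwards [hL]
    rintro _ ⟨v, rfl⟩
    exact ⟨Multiplicative.ofAdd v, rfl⟩

/-! ### Principal units -/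

/-- The group of principal units of a non-archimedean field: the `x` with `‖x - 1‖ < 1`. The
condition `‖x‖ = 1`, which follows from this (see `mem_principalUnits`), is included for
convenience. -/
def principalUnits (E : Type*) [NormedField E] [IsUltrametricDist E] : Subgroup Eˣ where
  carrier := {x | ‖(x : E)‖ = 1 ∧ ‖(x : E) - 1‖ < 1}
  one_mem' := by simp
  mul_mem' := by
    rintro x y ⟨hx, hx'⟩ ⟨hy, hy'⟩
    refine ⟨by simp [hx, hy], ?_⟩
    have : ((x * y : Eˣ) : E) - 1 = x * ((y : E) - 1) + ((x : E) - 1) := by push_cast; ring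
    rw [this]
    refine (IsUltrametricDist.norm_add_le_max _ _).trans_lt (max_lt ?_ hx')
    rwa [norm_mul, hx, one_mul]
  inv_mem' := by
    rintro x ⟨hx, hx'⟩
    refine ⟨by simp [hx], ?_⟩
    have : ((x⁻¹ : Eˣ) : E) - 1 = -((x⁻¹ : Eˣ) * ((x : E) - 1)) := by
      rw [mul_sub, Units.inv_mul]; ring
    rw [this, norm_neg, norm_mul, Units.val_inv_eq_inv_val, norm_inv, hx, inv_one, one_mul]
    exact hx'

theorem norm_eq_one_of_norm_sub_one_lt {E : Type*} [NormedField E] [IsUltrametricDist E] {x : E}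
    (h : ‖x - 1‖ < 1) : ‖x‖ = 1 := by
  have := IsUltrametricDist.norm_add_eq_max_of_norm_ne_norm (x := x - 1) (y := 1) (by
    rw [norm_one]; exact h.ne)
  rw [sub_add_cancel, norm_one, max_eq_right h.le] at this
  exact this

theorem mem_principalUnits {E : Type*} [NormedField E] [IsUltrametricDist E] {x : Eˣ} :
    x ∈ principalUnits E ↔ ‖(x : E) - 1‖ < 1 :=
  ⟨fun h => h.2, fun h => ⟨norm_eq_one_of_norm_sub_one_lt h, h⟩⟩

theorem norm_sub_le_max_norm {E : Type*} [NormedField E] [IsUltrametricDist E] (x y : E) :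
    ‖x - y‖ ≤ max ‖x‖ ‖y‖ := by
  rw [sub_eq_add_neg, ← norm_neg y]
  exact IsUltrametricDist.norm_add_le_max _ _

/-- The binomial expansion of `(1 + (x - 1)) ^ p`, in which all middle terms are divisible by
`p * (x - 1)`. -/
theorem exists_pow_prime_sub_one_eq {p : ℕ} (hp : p.Prime) {E : Type*} [NormedField E]
    [IsUltrametricDist E] {x : E} (hx : ‖x - 1‖ ≤ 1) :
    ∃ s : E, ‖s‖ ≤ 1 ∧ x ^ p - 1 = (x - 1) ^ p + p * (x - 1) * s := by
  have h := add_pow_prime_eq hp (x - 1) 1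
  rw [sub_add_cancel, one_pow, mul_one] at h
  refine ⟨∑ k ∈ Finset.Ioo 0 p, (x - 1) ^ (k - 1) * 1 ^ (p - k - 1) * ((p.choose k / p : ℕ) : E),
    ?_, by rw [h]; ring⟩
  refine IsUltrametricDist.norm_sum_le_of_forall_le_of_nonneg zero_le_one fun k _ => ?_
  rw [norm_mul, norm_mul, one_pow, norm_one, mul_one, norm_pow]
  exact mul_le_one₀ (pow_le_one₀ (norm_nonneg _) hx) (norm_nonneg _)
    (IsUltrametricDist.norm_natCast_le_one E _)

theorem norm_pow_prime_sub_one_le {p : ℕ} (hp : p.Prime) {E : Type*} [NormedField E]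
    [IsUltrametricDist E] {ρ : ℝ} (hρ : ρ ≤ 1) {x : E} (hx : ‖x - 1‖ ≤ ρ) :
    ‖x ^ p - 1‖ ≤ max ρ ‖(p : E)‖ * ‖x - 1‖ := by
  obtain ⟨s, hs, h⟩ := exists_pow_prime_sub_one_eq hp (hx.trans hρ)
  rw [h]
  refine (IsUltrametricDist.norm_add_le_max _ _).trans (max_le ?_ ?_)
  · obtain ⟨q, hq⟩ : ∃ q, p = q + 1 + 1 := ⟨p - 2, by have := hp.two_le; omega⟩
    rw [norm_pow, hq, pow_succ]
    refine mul_le_mul_of_nonneg_right (le_max_of_le_left ?_) (norm_nonneg _)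
    rw [pow_succ]
    exact (mul_le_of_le_one_left (norm_nonneg _)
      (pow_le_one₀ (norm_nonneg _) (hx.trans hρ))).trans hx
  · rw [norm_mul, norm_mul]
    refine (mul_le_of_le_one_right (by positivity) hs).trans ?_
    exact mul_le_mul_of_nonneg_right (le_max_right _ _) (norm_nonneg _)

/-- The `p`-power map is uniformly contracting towards `1` on the ball of radius `ρ` around `1`. -/
theorem norm_pow_prime_pow_sub_one_le {p : ℕ} (hp : p.Prime) {E : Type*} [NormedField E]
    [IsUltrametricDist E] {ρ : ℝ} (hρ : ρ ≤ 1) {x : E} (hx : ‖x - 1‖ ≤ ρ) (k : ℕ) :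
    ‖x ^ p ^ k - 1‖ ≤ max ρ ‖(p : E)‖ ^ k * ‖x - 1‖ := by
  have hc1 : max ρ ‖(p : E)‖ ≤ 1 := max_le hρ (IsUltrametricDist.norm_natCast_le_one E _)
  have hc0 : 0 ≤ max ρ ‖(p : E)‖ := le_max_of_le_right (norm_nonneg _)
  induction k with
  | zero => simp
  | succ k ih =>
    have h1 : ‖x ^ p ^ k - 1‖ ≤ ρ :=
      (ih.trans (mul_le_of_le_one_left (norm_nonneg _) (pow_le_one₀ hc0 hc1))).trans hx
    rw [pow_succ, pow_mul, pow_succ' (max _ _), mul_assoc]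
    exact (norm_pow_prime_sub_one_le hp hρ h1).trans (mul_le_mul_of_nonneg_left ih hc0)

/-- By local compactness the norm attains its maximum on the open unit ball, which is also
closed. -/
theorem exists_uniformizer (p : ℕ) [Fact p.Prime] (E : Type*) [NormedField E]
    [NormedAlgebra ℚ_[p] E] [FiniteDimensional ℚ_[p] E] [IsUltrametricDist E] :
    ∃ π : Eˣ, ‖(π : E)‖ < 1 ∧ ∀ x : E, ‖x‖ < 1 → ‖x‖ ≤ ‖(π : E)‖ := by
  have : ProperSpace E := FiniteDimensional.proper ℚ_[p] E
  have hc : IsCompact (Metric.ball (0 : E) 1) :=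
    Metric.isCompact_of_isClosed_isBounded (IsUltrametricDist.isClosed_ball _ _)
      Metric.isBounded_ball
  obtain ⟨π, hπ, hmax⟩ := hc.exists_isMaxOn ⟨0, by simp⟩ continuous_norm.continuousOn
  have hle (x : E) (hx : ‖x‖ < 1) : ‖x‖ ≤ ‖π‖ := hmax (by simpa using hx)
  have h1 : ‖(p : ℚ_[p])‖ ≤ ‖π‖ := by
    have := hle (algebraMap ℚ_[p] E p) (by rw [norm_algebraMap']; exact Padic.norm_p_lt_one)
    rwa [norm_algebraMap'] at this
  have h0 : π ≠ 0 := norm_pos_iff.1 (lt_of_lt_of_le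
    (norm_pos_iff.2 (by exact_mod_cast (Fact.out : p.Prime).ne_zero)) h1)
  exact ⟨Units.mk0 π h0, by simpa using hπ, hle⟩

theorem norm_prime_lt_one (p : ℕ) [Fact p.Prime] (E : Type*) [NormedField E]
    [NormedAlgebra ℚ_[p] E] : ‖(p : E)‖ < 1 := by
  rw [← map_natCast (algebraMap ℚ_[p] E), norm_algebraMap']
  exact Padic.norm_p_lt_one

/-- After raising to the power `p ^ k`, all principal units lie in the neighbourhood of `1` covered by
the exponential. -/
theorem exists_lattice_principalUnits (p : ℕ) [Fact p.Prime] (E : Type*) [NormedField E]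
    [NormedAlgebra ℚ_[p] E] [FiniteDimensional ℚ_[p] E] [IsUltrametricDist E] (d : ℕ)
    (hd : Module.finrank ℚ_[p] E = d) :
    ∃ (ι : Multiplicative (Fin d → ℤ_[p]) →* principalUnits E) (k : ℕ), Function.Injective ι ∧
      ∀ x : principalUnits E, ∃ v, ι v = x ^ p ^ k := by
  obtain ⟨ι, hι, hι1, hnhds⟩ := exists_exp_lattice p E d hd
  obtain ⟨π, hπ, hmax⟩ := exists_uniformizer p E
  obtain ⟨ε, hε, hεS⟩ := Metric.eventually_nhds_iff.1 hnhds
  obtain ⟨k, hk⟩ := exists_pow_lt_of_lt_one hε (max_lt hπ (norm_prime_lt_one p E))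
  refine ⟨ι.codRestrict _ fun v => mem_principalUnits.2 (hι1 v), k, ?_, fun x => ?_⟩
  · intro v w hvw
    exact hι (congrArg Subtype.val hvw)
  · have hx := mem_principalUnits.1 x.2
    have h1 := norm_pow_prime_pow_sub_one_le (Fact.out : p.Prime) hπ.le (hmax _ hx) k
    have h2 : ‖((x : Eˣ) : E) ^ p ^ k - 1‖ < ε :=
      (h1.trans (mul_le_of_le_one_right (by positivity) hx.le)).trans_lt hk
    obtain ⟨v, hv⟩ := hεS (by rw [dist_eq_norm]; exact h2)
    exact ⟨v, Subtype.ext (Units.ext (by simpa using hv))⟩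

/-- A root of unity of `p`-power order reduces to `1`, as the residue field has
characteristic `p`. -/
theorem primaryComponent_le_principalUnits {p : ℕ} [Fact p.Prime] {E : Type*} [NormedField E]
    [IsUltrametricDist E] (hp : ‖(p : E)‖ < 1) :
    CommGroup.primaryComponent Eˣ p ≤ principalUnits E := by
  rintro x ⟨j, hj⟩
  induction j generalizing x with
  | zero =>
    rw [pow_zero, pow_one] at hj
    rw [hj]
    exact one_mem _
  | succ j ih =>
    have hxp : x ^ p ∈ principalUnits E := ih (by rw [← pow_mul, ← pow_succ', hj])
    rw [mem_principalUnits, Units.val_pow_eq_pow_val] at hxp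
    have hx : ‖(x : E)‖ = 1 := by
      have := norm_eq_one_of_norm_sub_one_lt hxp
      rw [norm_pow] at this
      exact (pow_eq_one_iff_of_nonneg (norm_nonneg _) (Fact.out : p.Prime).ne_zero).1 this
    have hx1 : ‖(x : E) - 1‖ ≤ 1 :=
      (norm_sub_le_max_norm _ _).trans (by simp [hx])
    obtain ⟨s, hs, h⟩ := exists_pow_prime_sub_one_eq (Fact.out : p.Prime) hx1
    have h1 : ‖((x : E) - 1) ^ p‖ < 1 := by
      rw [eq_sub_of_add_eq h.symm]
      refine (norm_sub_le_max_norm _ _).trans_lt (max_lt hxp ?_)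
      rw [norm_mul, norm_mul]
      exact (mul_le_of_le_one_right (by positivity) hs).trans_lt
        ((mul_le_of_le_one_right (norm_nonneg _) hx1).trans_lt hp)
    rw [mem_principalUnits]
    rw [norm_pow] at h1
    by_contra! hge
    exact h1.not_ge (one_le_pow₀ hge)

theorem nonempty_principalUnits_mulEquiv (p : ℕ) [Fact p.Prime] (E : Type*) [NormedField E]
    [NormedAlgebra ℚ_[p] E] [FiniteDimensional ℚ_[p] E] [IsUltrametricDist E] (d : ℕ)
    (hd : Module.finrank ℚ_[p] E = d) :
    Nonempty (principalUnits E ≃*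
      Multiplicative (Fin d → ℤ_[p]) × CommGroup.primaryComponent Eˣ p) := by
  obtain ⟨ι, k, hι, hk⟩ := exists_lattice_principalUnits p E d hd
  obtain ⟨s, hs1, hs2⟩ := exists_free_complement (A := Additive (principalUnits E))
    (MonoidHom.toAdditiveRight ι) hι k hk
  let s' : Multiplicative (Fin d → ℤ_[p]) →* principalUnits E := s.toMultiplicativeLeft
  have hs1' (v) (h : s' v ^ p ^ k = 1) : v = 1 := hs1 v h
  have hs2' (x : principalUnits E) : ∃ v, (x * (s' v)⁻¹) ^ p ^ k = 1 := by
    obtain ⟨v, hv⟩ := hs2 (Additive.ofMul x)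
    rw [sub_eq_add_neg] at hv
    exact ⟨Multiplicative.ofAdd v, hv⟩
  refine nonempty_mulEquiv_prod s'
    (Subgroup.inclusion (primaryComponent_le_principalUnits (norm_prime_lt_one p E)))
    (Subgroup.inclusion_injective _) ?_ ?_
  · -- the map `s'` is injective with torsion-free source, so its values have no `p`-power torsion
    rintro v ⟨⟨x, j, hj⟩, hx⟩
    have hsv : s' v ^ p ^ j = 1 := by
      rw [← hx]
      exact Subtype.ext hj
    have h1 : v ^ p ^ j = 1 := hs1' _ (by rw [map_pow, hsv, one_pow])
    have h2 : p ^ j • v.toAdd = 0 := congrArg Multiplicative.toAdd h1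
    exact congrArg Multiplicative.ofAdd
      ((smul_eq_zero_iff_right (pow_ne_zero j (Fact.out : p.Prime).ne_zero)).1 h2)
  · intro x
    obtain ⟨v, hv⟩ := hs2' x
    exact ⟨v, ⟨_, k, congrArg Subtype.val hv⟩, rfl⟩

/-! ### Units of norm one and the residue field -/

/-- The group of units of the valuation ring of `E`, as a subgroup of `Eˣ`. -/
def normOneUnits (E : Type*) [NormedField E] : Subgroup Eˣ where
  carrier := {x | ‖(x : E)‖ = 1}
  one_mem' := by simp
  mul_mem' := by
    intro x y (hx : ‖(x : E)‖ = 1) (hy : ‖(y : E)‖ = 1)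
    simp [hx, hy]
  inv_mem' := by
    intro x (hx : ‖(x : E)‖ = 1)
    simp [hx]

/-- A reduced ring of characteristic `p` has no nontrivial `p`-th roots of unity. -/
theorem card_units_residue_coprime {p : ℕ} [Fact p.Prime] {R : Type*} [CommRing R] [IsReduced R]
    [Finite R] (hp : (p : R) = 0) : (Nat.card Rˣ).Coprime p := by
  rcases subsingleton_or_nontrivial R with hR | hR
  · simp
  have : CharP R p := (CharP.charP_iff_prime_eq_zero Fact.out).2 hp
  rw [Nat.coprime_comm, (Fact.out : p.Prime).coprime_iff_not_dvd]
  intro hdvd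
  obtain ⟨u, hu⟩ := exists_prime_orderOf_dvd_card' p hdvd
  have h1 : ((u : R) - 1) ^ p = 0 := by
    rw [sub_pow_char, one_pow, sub_eq_zero]
    rw [← Units.val_pow_eq_pow_val, ← hu, pow_orderOf_eq_one, Units.val_one]
  have h2 : u = 1 := Units.ext (sub_eq_zero.1 (eq_zero_of_pow_eq_zero h1))
  rw [h2, orderOf_one] at hu
  exact (Fact.out : p.Prime).one_lt.ne hu

theorem finite_residueRing (p : ℕ) [Fact p.Prime] {E : Type*} [NormedField E]
    [NormedAlgebra ℚ_[p] E] [FiniteDimensional ℚ_[p] E]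
    (O : Subring E) (hO : ∀ x : E, x ∈ O ↔ ‖x‖ ≤ 1)
    (m : Ideal O) (hm : ∀ x : O, x ∈ m ↔ ‖(x : E)‖ < 1) : Finite (O ⧸ m) := by
  have : ProperSpace E := FiniteDimensional.proper ℚ_[p] E
  have : CompactSpace O := isCompact_iff_compactSpace.1 (by
    convert isCompact_closedBall (0 : E) 1
    ext x
    simpa using hO x)
  have hopen : IsOpen (m : Set O) := by
    have : (m : Set O) = {x : O | ‖(x : E)‖ < 1} := Set.ext hm
    rw [this]
    exact isOpen_lt (by fun_prop) continuous_const
  exact AddSubgroup.quotient_finite_of_isOpen m.toAddSubgroup hopen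

theorem nonempty_normOneUnits_mulEquiv (p : ℕ) [Fact p.Prime] {E : Type*} [NormedField E]
    [NormedAlgebra ℚ_[p] E] [FiniteDimensional ℚ_[p] E] [IsUltrametricDist E]
    (O : Subring E) (hO : ∀ x : E, x ∈ O ↔ ‖x‖ ≤ 1)
    (m : Ideal O) (hm : ∀ x : O, x ∈ m ↔ ‖(x : E)‖ < 1) :
    Nonempty (normOneUnits E ≃* (O ⧸ m)ˣ × principalUnits E) := by
  have hfin := finite_residueRing p O hO m hm
  have hred : IsReduced (O ⧸ m) := by
    rw [← Ideal.isRadical_iff_quotient_reduced]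
    rintro x ⟨n, hn⟩
    rw [hm] at hn ⊢
    rw [SubmonoidClass.coe_pow, norm_pow] at hn
    by_contra! h
    exact hn.not_ge (one_le_pow₀ h)
  have hcop : (Nat.card (O ⧸ m)ˣ).Coprime p := card_units_residue_coprime (by
    rw [← map_natCast (Ideal.Quotient.mk m), Ideal.Quotient.eq_zero_iff_mem, hm]
    simpa using norm_prime_lt_one p E)
  obtain ⟨ι, k, hι, hk⟩ := exists_lattice_principalUnits p E _ rfl
  have hbij := pow_bijective_of_coprime ι hι k hk hcop
  set N := Nat.card (O ⧸ m)ˣ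
  -- the reduction map
  let ρ : normOneUnits E →* (O ⧸ m)ˣ := MonoidHom.toHomUnits
    { toFun := fun x => Ideal.Quotient.mk m ⟨((x : Eˣ) : E), (hO _).2 (le_of_eq x.2)⟩
      map_one' := map_one (Ideal.Quotient.mk m)
      map_mul' := fun x y => map_mul (Ideal.Quotient.mk m) ⟨((x : Eˣ) : E), (hO _).2 (le_of_eq x.2)⟩
        ⟨((y : Eˣ) : E), (hO _).2 (le_of_eq y.2)⟩ }
  have hρ (x : normOneUnits E) : ρ x = 1 ↔ (x : Eˣ) ∈ principalUnits E := by
    rw [mem_principalUnits, ← Units.val_inj, Units.val_one]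
    change Ideal.Quotient.mk m _ = Ideal.Quotient.mk m 1 ↔ _
    rw [Ideal.Quotient.eq, hm]
    rfl
  have hsurj (u : (O ⧸ m)ˣ) : ∃ x, ρ x = u := by
    obtain ⟨⟨x, hxO⟩, hx⟩ := Ideal.Quotient.mk_surjective (u : O ⧸ m)
    rcases subsingleton_or_nontrivial (O ⧸ m) with _ | _
    · exact ⟨1, Subsingleton.elim _ _⟩
    have h1 : ‖x‖ = 1 := by
      refine le_antisymm ((hO x).1 hxO) (not_lt.1 fun h => u.ne_zero ?_)
      rw [← hx, Ideal.Quotient.eq_zero_iff_mem, hm]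
      exact h
    exact ⟨⟨Units.mk0 x (norm_pos_iff.1 (h1 ▸ one_pos)), h1⟩, Units.ext hx⟩
  have hpowN (x : normOneUnits E) : (x : Eˣ) ^ N ∈ principalUnits E := by
    have := (hρ (x ^ N)).1 (by rw [map_pow, pow_card_eq_one'])
    exact this
  -- the `N`-th roots of unity are a complement of the principal units
  let T : Subgroup (normOneUnits E) := (powMonoidHom N : normOneUnits E →* normOneUnits E).ker
  have hTU (x : normOneUnits E) (hx : x ∈ T) (hx' : (x : Eˣ) ∈ principalUnits E) : x = 1 := by
    have h1 : x ^ N = 1 := hx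
    have h2 : (⟨x, hx'⟩ : principalUnits E) = 1 := hbij.1 (by
      apply Subtype.ext
      change (x : Eˣ) ^ N = 1 ^ N
      rw [one_pow]
      exact congrArg Subtype.val h1)
    exact Subtype.ext (congrArg (fun z : principalUnits E => (z : Eˣ)) h2)
  have hfac (x : normOneUnits E) : ∃ t ∈ T, ((x * t⁻¹ : normOneUnits E) : Eˣ) ∈ principalUnits E := by
    obtain ⟨y, hy⟩ := hbij.2 ⟨_, hpowN x⟩
    have hy' : (y : Eˣ) ^ N = (x : Eˣ) ^ N := congrArg Subtype.val hy
    let y' : normOneUnits E := ⟨y, y.2.1⟩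
    refine ⟨x * y'⁻¹, ?_, ?_⟩
    · change (x * y'⁻¹) ^ N = 1
      rw [mul_pow, inv_pow, mul_inv_eq_one]
      exact Subtype.ext hy'.symm
    · rw [mul_inv, mul_inv_cancel_left, inv_inv]
      exact y.2
  have hτ : Function.Bijective (ρ.comp T.subtype) := by
    constructor
    · rw [injective_iff_map_eq_one]
      rintro ⟨t, ht⟩ h
      exact Subtype.ext (hTU t ht ((hρ t).1 h))
    · intro u
      obtain ⟨x, rfl⟩ := hsurj u
      obtain ⟨t, ht, h⟩ := hfac x
      refine ⟨⟨t, ht⟩, ?_⟩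
      rw [← hρ, map_mul, map_inv, mul_inv_eq_one] at h
      exact h.symm
  let i : principalUnits E →* normOneUnits E :=
    Subgroup.inclusion fun x hx => hx.1
  have hi (x : normOneUnits E) : x ∈ i.range ↔ (x : Eˣ) ∈ principalUnits E := by
    constructor
    · rintro ⟨y, rfl⟩
      exact y.2
    · exact fun h => ⟨⟨x, h⟩, rfl⟩
  obtain ⟨e⟩ := nonempty_mulEquiv_prod T.subtype i (Subgroup.inclusion_injective _)
    (fun t ht => Subtype.ext (hTU t t.2 ((hi _).1 ht)))
    (fun x => by
      obtain ⟨t, ht, h⟩ := hfac x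
      exact ⟨⟨t, ht⟩, (hi _).2 h⟩)
  exact ⟨e.trans ((MulEquiv.ofBijective _ hτ).prodCongr (MulEquiv.refl _))⟩

/-! ### The decomposition of the multiplicative group -/

theorem nonempty_units_mulEquiv_int_prod (p : ℕ) [Fact p.Prime] (E : Type*) [NormedField E]
    [NormedAlgebra ℚ_[p] E] [FiniteDimensional ℚ_[p] E] [IsUltrametricDist E] :
    Nonempty (Eˣ ≃* Multiplicative ℤ × normOneUnits E) := by
  obtain ⟨π, hπ, hmax⟩ := exists_uniformizer p E
  have hπ0 : 0 < ‖(π : E)‖ := norm_pos_iff.2 π.ne_zero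
  refine nonempty_mulEquiv_prod (zpowersHom Eˣ π) (normOneUnits E).subtype
    (Subgroup.subtype_injective _) ?_ ?_
  · rw [Subgroup.range_subtype]
    intro n (hn : ‖((π ^ n.toAdd : Eˣ) : E)‖ = 1)
    rw [Units.val_zpow_eq_zpow_val, norm_zpow] at hn
    exact congrArg Multiplicative.ofAdd
      ((zpow_right_injective₀ hπ0 hπ.ne (hn.trans (zpow_zero _).symm) : n.toAdd = 0))
  · rw [Subgroup.range_subtype]
    intro a
    obtain ⟨n, hn1, hn2⟩ := exists_mem_Ioc_zpow (norm_pos_iff.2 a.ne_zero)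
      ((one_lt_inv₀ hπ0).2 hπ)
    refine ⟨Multiplicative.ofAdd (-(n + 1)), ?_⟩
    change ‖((a * (π ^ (-(n + 1)))⁻¹ : Eˣ) : E)‖ = 1
    rw [← zpow_neg, neg_neg, Units.val_mul, norm_mul, Units.val_zpow_eq_zpow_val, norm_zpow]
    rw [inv_zpow', zpow_neg] at hn1 hn2
    have h1 : ‖(a : E)‖ * ‖(π : E)‖ ^ (n + 1) ≤ 1 := by
      rwa [← le_div_iff₀ (by positivity), one_div]
    have h2 : ‖(π : E)‖ < ‖(a : E)‖ * ‖(π : E)‖ ^ (n + 1) := by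
      rw [zpow_add_one₀ hπ0.ne', ← mul_assoc]
      apply lt_mul_of_one_lt_left hπ0
      rwa [← div_lt_iff₀ (by positivity), one_div]
    by_contra hne
    have h3 := hmax (a * π ^ (n + 1)) (by
      rw [norm_mul, norm_zpow]; exact lt_of_le_of_ne h1 hne)
    rw [norm_mul, norm_zpow] at h3
    exact h2.not_ge h3


/-- Let `E` be a finite extension of `ℚ_p` of degree `d` (carrying
the unique extension of the `p`-adic absolute value, encoded by a multiplicative norm
for which the structure map `ℚ_p → E` is an isometry).  Let `O` be the ring of
integers of `E` (the subring of elements of norm at most `1`), `m` its maximal ideal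
(elements of norm strictly less than `1`), so that `k_E = O ⧸ m` is the residue field.
Then there is an isomorphism of abstract groups
`Eˣ ≃ ℤ × k_Eˣ × μ_{p^∞}(E) × ℤ_p^d`,
where `μ_{p^∞}(E)` is the `p`-primary torsion subgroup of `Eˣ` (roots of unity of
`p`-power order) and `ℤ`, `ℤ_p^d` are additive groups. -/
theorem units_of_padic_field_decomposition
    (p : ℕ) [Fact p.Prime] (E : Type*) [NormedField E]
    [Algebra ℚ_[p] E] [FiniteDimensional ℚ_[p] E]
    (hiso : ∀ x : ℚ_[p], ‖algebraMap ℚ_[p] E x‖ = ‖x‖)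
    (d : ℕ) (hd : Module.finrank ℚ_[p] E = d)
    (O : Subring E) (hO : ∀ x : E, x ∈ O ↔ ‖x‖ ≤ 1)
    (m : Ideal O) (hm : ∀ x : O, x ∈ m ↔ ‖(x : E)‖ < 1) :
    Nonempty (Eˣ ≃* Multiplicative ℤ × ((O ⧸ m)ˣ ×
      (CommGroup.primaryComponent Eˣ p × Multiplicative (Fin d → ℤ_[p])))) := by
  let _ : NormedAlgebra ℚ_[p] E :=
    { norm_smul_le := fun r x => by rw [Algebra.smul_def, norm_mul, hiso] }
  have : IsUltrametricDist E :=
    IsUltrametricDist.isUltrametricDist_of_forall_norm_natCast_le_one fun n => by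
      rw [← map_natCast (algebraMap ℚ_[p] E), hiso]
      exact IsUltrametricDist.norm_natCast_le_one _ _
  obtain ⟨e₁⟩ := nonempty_units_mulEquiv_int_prod p E
  obtain ⟨e₂⟩ := nonempty_normOneUnits_mulEquiv p O hO m hm
  obtain ⟨e₃⟩ := nonempty_principalUnits_mulEquiv p E d hd
  exact ⟨e₁.trans ((MulEquiv.refl _).prodCongr
    (e₂.trans ((MulEquiv.refl _).prodCongr (e₃.trans MulEquiv.prodComm))))⟩
end
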